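/- Let Σ be a CNF theory and V ⊆ 𝒜. If Σ is a Horn theory (respectively: a Krom theory, a Horn renamable theory, a q-Horn theory), then unfold(Σ, V) is a Horn theory (respectively: a Krom theory, a Horn renamable theory, a q-Horn theory). -/

import Mathlib

variable {α : Type*} [Fintype α] [DecidableEq α]

/-- A clause (or term): a finite set of literals, where a literal is an atom
paired with a polarity (`true` = positive occurrence, `false` = negated). -/
abbrev Clause (α : Type*) := Finset (α × Bool)

/-- A finite set of literals is a legal clause/term if it contains no
complementary pair of literals. -/
def IsClause (c : Clause α) : Prop := ∀ p : α, ¬((p, true) ∈ c ∧ (p, false) ∈ c)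

instance : DecidablePred (IsClause (α := α)) := fun c =>
  decidable_of_iff (∀ p : α, ¬((p, true) ∈ c ∧ (p, false) ∈ c)) Iff.rfl

/-- The atoms occurring in a clause/term. -/
def varsC (c : Clause α) : Finset α := c.image Prod.fst

/-- The atoms occurring positively in a clause/term. -/
def posC (c : Clause α) : Finset α := (c.filter fun l => l.2 = true).image Prod.fst

/-- The atoms occurring negatively in a clause/term. -/
def negC (c : Clause α) : Finset α := (c.filter fun l => l.2 = false).image Prod.fst

/-- The resolvent of two clauses on atom `p`. -/
def res (c c' : Clause α) (p : α) : Clause α :=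
  (c ∪ c') \ ({(p, true), (p, false)} : Finset (α × Bool))

/-- `c` and `c'` are resolvable on atom `p`: `p` occurs in one of them and `¬p` in
the other, and the resolvent contains no complementary pair of literals. -/
def ResolvableOn (c c' : Clause α) (p : α) : Prop :=
  ((p, true) ∈ c ∧ (p, false) ∈ c' ∨ (p, false) ∈ c ∧ (p, true) ∈ c') ∧ IsClause (res c c' p)

/-- Renaming of a literal: flip the polarity of atoms in `V`. -/
def renLit (V : Finset α) (l : α × Bool) : α × Bool := if l.1 ∈ V then (l.1, !l.2) else l

/-- Renaming of a clause w.r.t. the atoms in `V`. -/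
def renClause (V : Finset α) (c : Clause α) : Clause α := c.image (renLit V)

/-- Renaming of a CNF theory w.r.t. the atoms in `V`. -/
def renTheory (V : Finset α) (T : Finset (Clause α)) : Finset (Clause α) := T.image (renClause V)

/-- A Horn clause: at most one positive literal. -/
def HornClause (c : Clause α) : Prop := (posC c).card ≤ 1

/-- A Horn theory: a finite set of Horn clauses. -/
def IsHornTheory (T : Finset (Clause α)) : Prop := ∀ c ∈ T, HornClause c

/-- A Krom theory: each clause contains at most 2 literals. -/
def IsKromTheory (T : Finset (Clause α)) : Prop := ∀ c ∈ T, c.card ≤ 2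

/-- `T` is Horn renamable: some renaming of `T` is a Horn theory. -/
def IsRenHorn (T : Finset (Clause α)) : Prop := ∃ V : Finset α, IsHornTheory (renTheory V T)

/-- The QH-conditions for sets of atoms `Q`, `H` and a clause `c`. -/
def QHcond (Q H : Finset α) (c : Clause α) : Prop :=
  (varsC c ∩ Q).card ≤ 2 ∧ (posC c ∩ H).card ≤ 1 ∧
    ((posC c ∩ H).card = 1 → varsC c ∩ Q = ∅)

/-- The atoms occurring in a CNF theory. -/
def varsT (T : Finset (Clause α)) : Finset α := T.sup varsC

/-- `T` has a QH-partition: a partition `{Q, H}` of its atoms satisfying the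
QH-conditions for each of its clauses. -/
def HasQHPartition (T : Finset (Clause α)) : Prop :=
  ∃ Q H : Finset α, Q ∩ H = ∅ ∧ Q ∪ H = varsT T ∧ ∀ c ∈ T, QHcond Q H c

/-- `T` is q-Horn: some renaming of `T` has a QH-partition. -/
def IsQHorn (T : Finset (Clause α)) : Prop := ∃ V : Finset α, HasQHPartition (renTheory V T)

/-- Satisfaction of a literal by an interpretation (a set of atoms). -/
def litSat (I : Set α) (l : α × Bool) : Prop := if l.2 then l.1 ∈ I else l.1 ∉ I

/-- Satisfaction of a clause (read disjunctively). -/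
def clauseSat (I : Set α) (c : Clause α) : Prop := ∃ l ∈ c, litSat I l

/-- Satisfaction of a term (read conjunctively). -/
def termSat (I : Set α) (t : Clause α) : Prop := ∀ l ∈ t, litSat I l

/-- Satisfaction of a CNF theory. -/
def cnfSat (I : Set α) (T : Finset (Clause α)) : Prop := ∀ c ∈ T, clauseSat I c

/-- One step of the resolution closure. -/
def resStep (S : Set (Clause α)) : Set (Clause α) :=
  S ∪ {d | ∃ c ∈ S, ∃ c' ∈ S, ∃ p : α, ResolvableOn c c' p ∧ d = res c c' p}

/-- The iterated resolution closure `res^n_T`. -/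
def resIter (T : Finset (Clause α)) : ℕ → Set (Clause α)
  | 0 => (↑T : Set (Clause α))
  | n + 1 => resStep (resIter T n)

/-- Propositional formulas over atoms `α`. -/
inductive PropForm (α : Type*) where
  | var : α → PropForm α
  | tru : PropForm α
  | fls : PropForm α
  | neg : PropForm α → PropForm α
  | conj : PropForm α → PropForm α → PropForm α
  | disj : PropForm α → PropForm α → PropForm α

namespace PropForm

/-- Satisfaction of a formula by an interpretation. -/
def Sat (I : Set α) : PropForm α → Prop
  | var p => p ∈ I
  | tru => True
  | fls => False
  | neg φ => ¬ Sat I φ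
  | conj φ ψ => Sat I φ ∧ Sat I ψ
  | disj φ ψ => Sat I φ ∨ Sat I ψ

/-- Logical equivalence: same models. -/
def equivalent (φ ψ : PropForm α) : Prop := ∀ I : Set α, Sat I φ ↔ Sat I ψ

/-- Entailment: every model of `φ` is a model of `ψ`. -/
def entails (φ ψ : PropForm α) : Prop := ∀ I : Set α, Sat I φ → Sat I ψ

/-- The atoms occurring in a formula. -/
def vars : PropForm α → Finset α
  | var p => {p}
  | tru => ∅
  | fls => ∅
  | neg φ => vars φ
  | conj φ ψ => vars φ ∪ vars ψ
  | disj φ ψ => vars φ ∪ vars ψ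

/-- Substitution of the formula `χ` for the atom `p`. -/
def subst (p : α) (χ : PropForm α) : PropForm α → PropForm α
  | var q => if q = p then χ else var q
  | tru => tru
  | fls => fls
  | neg φ => neg (subst p χ φ)
  | conj φ ψ => conj (subst p χ φ) (subst p χ ψ)
  | disj φ ψ => disj (subst p χ φ) (subst p χ ψ)

/-- Forgetting a single atom: `Forget(φ, {p}) = φ[p/⊤] ∨ φ[p/⊥]`. -/
def forget1 (φ : PropForm α) (p : α) : PropForm α := disj (subst p tru φ) (subst p fls φ)

/-- Forgetting a set of atoms (presented as a list), one atom at a time: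
`Forget(φ, ∅) = φ` and `Forget(φ, V ∪ {p}) = Forget(Forget(φ, {p}), V)`. -/
def Forget : PropForm α → List α → PropForm α
  | φ, [] => φ
  | φ, p :: V => Forget (forget1 φ p) V

/-- Renaming of a formula: replace each occurrence of an atom `p ∈ V` by `¬p`. -/
def renForm (V : Finset α) : PropForm α → PropForm α
  | var p => if p ∈ V then neg (var p) else var p
  | tru => tru
  | fls => fls
  | neg φ => neg (renForm V φ)
  | conj φ ψ => conj (renForm V φ) (renForm V ψ)
  | disj φ ψ => disj (renForm V φ) (renForm V ψ)

/-- `φ` is irrelevant to the atoms in `V`: it is equivalent to a formula not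
mentioning any atom of `V`. -/
def IR (φ : PropForm α) (V : List α) : Prop :=
  ∃ φ' : PropForm α, equivalent φ φ' ∧ ∀ p ∈ V, p ∉ vars φ'

end PropForm

/-- The formula corresponding to a literal. -/
def litToForm (l : α × Bool) : PropForm α :=
  if l.2 then PropForm.var l.1 else PropForm.neg (PropForm.var l.1)

/-- The disjunction of the literals of a clause. -/
noncomputable def clauseToForm (c : Clause α) : PropForm α :=
  c.toList.foldr (fun l φ => PropForm.disj (litToForm l) φ) PropForm.fls

/-- The conjunction of the clauses of a CNF theory. -/
noncomputable def cnfToForm (T : Finset (Clause α)) : PropForm α :=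
  T.toList.foldr (fun c φ => PropForm.conj (clauseToForm c) φ) PropForm.tru

/-- `φ` is Horn expressible. -/
def HornExpressible (φ : PropForm α) : Prop :=
  ∃ T : Finset (Clause α), (∀ c ∈ T, IsClause c) ∧ IsHornTheory T ∧
    PropForm.equivalent φ (cnfToForm T)

/-- `φ` is Krom expressible. -/
def KromExpressible (φ : PropForm α) : Prop :=
  ∃ T : Finset (Clause α), (∀ c ∈ T, IsClause c) ∧ IsKromTheory T ∧
    PropForm.equivalent φ (cnfToForm T)

/-- `φ` is renamable-Horn expressible. -/
def RenHornExpressible (φ : PropForm α) : Prop :=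
  ∃ T : Finset (Clause α), (∀ c ∈ T, IsClause c) ∧ IsRenHorn T ∧
    PropForm.equivalent φ (cnfToForm T)

/-- `φ` is q-Horn expressible. -/
def QHornExpressible (φ : PropForm α) : Prop :=
  ∃ T : Finset (Clause α), (∀ c ∈ T, IsClause c) ∧ IsQHorn T ∧
    PropForm.equivalent φ (cnfToForm T)

/-- A formula entails a clause. -/
def EntailsClause (φ : PropForm α) (c : Clause α) : Prop :=
  ∀ I : Set α, PropForm.Sat I φ → clauseSat I c

/-- A prime implicate of a formula. -/
def IsPrimeImplicate (φ : PropForm α) (c : Clause α) : Prop :=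
  IsClause c ∧ EntailsClause φ c ∧ ∀ c' ⊂ c, ¬ EntailsClause φ c'

/-- A term entails a formula. -/
def TermEntails (t : Clause α) (φ : PropForm α) : Prop :=
  ∀ I : Set α, termSat I t → PropForm.Sat I φ

/-- A prime implicant of a formula. -/
def IsPrimeImplicant (φ : PropForm α) (t : Clause α) : Prop :=
  IsClause t ∧ TermEntails t φ ∧ ∀ t' ⊂ t, ¬ TermEntails t' φ

/-- A CNF theory entails a clause. -/
def TheoryEntailsClause (T : Finset (Clause α)) (c : Clause α) : Prop :=
  ∀ I : Set α, cnfSat I T → clauseSat I c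

/-- A prime implicate of a CNF theory. -/
def IsPrimeImplicateT (T : Finset (Clause α)) (c : Clause α) : Prop :=
  IsClause c ∧ TheoryEntailsClause T c ∧ ∀ c' ⊂ c, ¬ TheoryEntailsClause T c'

/-- The set of prime implicates of a CNF theory, as a finite theory. -/
noncomputable def PI (T : Finset (Clause α)) : Finset (Clause α) :=
  (Set.toFinite {c : Clause α | IsPrimeImplicateT T c}).toFinset

/-- Strong unfolding of a CNF theory w.r.t. an atom `p`: keep the clauses not
mentioning `p`, and replace the clauses containing the positive literal `p` by all
their resolvents with clauses containing `¬p`; clauses containing `¬p` are removed. -/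
def unfold1 (T : Finset (Clause α)) (p : α) : Finset (Clause α) :=
  T.filter (fun c => (p, true) ∉ c ∧ (p, false) ∉ c) ∪
    ((T ×ˢ T).filter fun cc =>
        (p, true) ∈ cc.1 ∧ (p, false) ∈ cc.2 ∧ IsClause (res cc.1 cc.2 p)).image
      fun cc => res cc.1 cc.2 p

/-- Iterated strong unfolding w.r.t. a set of atoms (presented as a list):
`unfold(T, ∅) = T` and `unfold(T, V ∪ {p}) = unfold(unfold(T, p), V)`. -/
def unfoldList (T : Finset (Clause α)) : List α → Finset (Clause α)
  | [] => T
  | p :: V => unfoldList (unfold1 T p) V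

theorem mem_posC (c : Clause α) (q : α) : q ∈ posC c ↔ (q, true) ∈ c := by
  simp [posC]

theorem mem_varsC (c : Clause α) (q : α) : q ∈ varsC c ↔ (q, true) ∈ c ∨ (q, false) ∈ c := by
  simp [varsC, or_comm]

theorem mem_res (c c' : Clause α) (p : α) (l : α × Bool) :
    l ∈ res c c' p ↔ (l ∈ c ∨ l ∈ c') ∧ l.1 ≠ p := by
  obtain ⟨q, b⟩ := l
  cases b <;> simp [res]

theorem mem_renClause (V : Finset α) (c : Clause α) (q : α) (b : Bool) :
    (q, b) ∈ renClause V c ↔ (q, if q ∈ V then !b else b) ∈ c := by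
  unfold renClause
  rw [Finset.mem_image]
  constructor
  · rintro ⟨⟨r, d⟩, h, e⟩
    by_cases hr : r ∈ V
    · simp only [renLit, hr, if_true, Prod.mk.injEq] at e
      obtain ⟨rfl, rfl⟩ := e
      simpa [hr] using h
    · simp only [renLit, hr, if_false, Prod.mk.injEq] at e
      obtain ⟨rfl, rfl⟩ := e
      simpa [hr] using h
  · intro h
    refine ⟨_, h, ?_⟩
    by_cases hq : q ∈ V <;> simp [renLit, hq]

theorem res_comm' (c c' : Clause α) (p : α) : res c c' p = res c' c p := by
  simp [res, Finset.union_comm]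

theorem renClause_res (V : Finset α) (c c' : Clause α) (p : α) :
    renClause V (res c c' p) = res (renClause V c) (renClause V c') p := by
  ext ⟨q, b⟩
  simp [mem_renClause, mem_res]

theorem varsC_renClause (V : Finset α) (c : Clause α) : varsC (renClause V c) = varsC c := by
  ext q
  by_cases hq : q ∈ V <;> simp [mem_varsC, mem_renClause, hq, or_comm]

theorem qh_res (Q H : Finset α) (c c' : Clause α) (p : α) (hp : (p, true) ∈ c)
    (hp' : (p, false) ∈ c') (hQH : p ∈ Q ∨ p ∈ H) (h : QHcond Q H c) (h' : QHcond Q H c') :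
    QHcond Q H (res c c' p) := by
  obtain ⟨h1, h2, h3⟩ := h
  obtain ⟨h1', h2', h3'⟩ := h'
  by_cases hQ : p ∈ Q
  · have m : p ∈ varsC c ∩ Q := by simp [mem_varsC, hp, hQ]
    have m' : p ∈ varsC c' ∩ Q := by simp [mem_varsC, hp', hQ]
    have e : posC c ∩ H = ∅ := by
      rw [← Finset.card_eq_zero]
      by_contra hne
      rw [h3 (by omega)] at m
      simp at m
    have e' : posC c' ∩ H = ∅ := by
      rw [← Finset.card_eq_zero]
      by_contra hne
      rw [h3' (by omega)] at m'
      simp at m'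
    have er : posC (res c c' p) ∩ H = ∅ := by
      ext q
      have := Finset.ext_iff.1 e q
      have := Finset.ext_iff.1 e' q
      simp only [Finset.mem_inter, mem_posC, mem_res, Finset.notMem_empty] at *
      tauto
    refine ⟨?_, by simp [er], by simp [er]⟩
    have hs : varsC (res c c' p) ∩ Q ⊆ (varsC c ∩ Q).erase p ∪ (varsC c' ∩ Q).erase p := by
      intro q
      simp only [Finset.mem_inter, Finset.mem_union, Finset.mem_erase, mem_varsC, mem_res]
      tauto
    have := Finset.card_le_card hs
    have := Finset.card_union_le ((varsC c ∩ Q).erase p) ((varsC c' ∩ Q).erase p)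
    have := Finset.card_erase_of_mem m
    have := Finset.card_erase_of_mem m'
    omega
  · have hH : p ∈ H := hQH.resolve_left hQ
    have m : p ∈ posC c ∩ H := by simp [mem_posC, hp, hH]
    have hc : (posC c ∩ H).card = 1 := by
      have := Finset.card_pos.2 ⟨p, m⟩
      omega
    have e := h3 hc
    have hs : varsC (res c c' p) ∩ Q ⊆ varsC c' ∩ Q := by
      intro q
      have := Finset.ext_iff.1 e q
      simp only [Finset.mem_inter, mem_varsC, mem_res, Finset.notMem_empty] at *
      tauto
    have hs' : posC (res c c' p) ∩ H ⊆ posC c' ∩ H := by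
      intro q hq
      have hu : q ∈ posC c ∩ H → q = p := fun hq => Finset.card_le_one.1 h2 q hq p m
      simp only [Finset.mem_inter, mem_posC, mem_res] at *
      tauto
    have k := Finset.card_le_card hs
    have k' := Finset.card_le_card hs'
    refine ⟨by omega, by omega, fun h => ?_⟩
    rw [h3' (by omega)] at hs
    exact Finset.subset_empty.1 hs

theorem qh_res_ren (V Q H : Finset α) (c c' : Clause α) (p : α) (hp : (p, true) ∈ c)
    (hp' : (p, false) ∈ c') (hQH : p ∈ Q ∨ p ∈ H) (h : QHcond Q H (renClause V c))
    (h' : QHcond Q H (renClause V c')) : QHcond Q H (renClause V (res c c' p)) := by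
  rw [renClause_res]
  by_cases hV : p ∈ V
  · rw [res_comm']
    exact qh_res Q H _ _ p (by simpa [mem_renClause, hV]) (by simpa [mem_renClause, hV]) hQH h' h
  · exact qh_res Q H _ _ p (by simpa [mem_renClause, hV]) (by simpa [mem_renClause, hV]) hQH h h'

theorem mem_unfold1 (T : Finset (Clause α)) (p : α) (d : Clause α) (hd : d ∈ unfold1 T p) :
    d ∈ T ∨ ∃ c ∈ T, ∃ c' ∈ T, (p, true) ∈ c ∧ (p, false) ∈ c' ∧ d = res c c' p := by
  simp only [unfold1, Finset.mem_union, Finset.mem_filter, Finset.mem_image, Finset.mem_product,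
    Prod.exists] at hd
  rcases hd with hd | ⟨c, c', ⟨⟨hc, hc'⟩, h1, h2, _⟩, rfl⟩
  · exact Or.inl hd.1
  · exact Or.inr ⟨c, hc, c', hc', h1, h2, rfl⟩

theorem unfold1_ren (V Q H : Finset α) (T : Finset (Clause α)) (p : α)
    (hQH : ∀ c ∈ T, varsC c ⊆ Q ∪ H) (h : ∀ c ∈ T, QHcond Q H (renClause V c)) :
    (∀ c ∈ unfold1 T p, varsC c ⊆ Q ∪ H) ∧
      ∀ c ∈ unfold1 T p, QHcond Q H (renClause V c) := by
  constructor
  · intro d hd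
    rcases mem_unfold1 T p d hd with hd | ⟨c, hc, c', hc', h1, h2, rfl⟩
    · exact hQH d hd
    · intro q hq
      have a := @hQH c hc q
      have b := @hQH c' hc' q
      simp only [mem_varsC, mem_res] at *
      tauto
  · intro d hd
    rcases mem_unfold1 T p d hd with hd | ⟨c, hc, c', hc', h1, h2, rfl⟩
    · exact h d hd
    · exact qh_res_ren V Q H c c' p h1 h2
        (Finset.mem_union.1 (hQH c hc (by simp [mem_varsC, h1]))) (h c hc) (h c' hc')

theorem unfoldList_ren (V Q H : Finset α) (L : List α) (T : Finset (Clause α))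
    (hQH : ∀ c ∈ T, varsC c ⊆ Q ∪ H) (h : ∀ c ∈ T, QHcond Q H (renClause V c)) :
    ∀ c ∈ unfoldList T L, QHcond Q H (renClause V c) ∧ varsC c ⊆ Q ∪ H := by
  induction L generalizing T with
  | nil => exact fun c hc => ⟨h c hc, hQH c hc⟩
  | cons p L ih =>
    obtain ⟨a, b⟩ := unfold1_ren V Q H T p hQH h
    exact ih _ a b

theorem qh_univ (c : Clause α) : QHcond ∅ Finset.univ c ↔ HornClause c := by
  simp [QHcond, HornClause]

theorem renHorn_unfoldList (V : Finset α) (L : List α) (T : Finset (Clause α))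
    (h : ∀ c ∈ T, HornClause (renClause V c)) :
    ∀ c ∈ unfoldList T L, HornClause (renClause V c) := by
  intro c hc
  rw [← qh_univ]
  exact (unfoldList_ren V ∅ Finset.univ L T (by simp) (fun c hc => (qh_univ _).2 (h c hc)) c hc).1

theorem renClause_empty (c : Clause α) : renClause ∅ c = c := by
  ext ⟨q, b⟩
  simp [mem_renClause]

theorem krom_unfoldList (L : List α) (T : Finset (Clause α)) (h : IsKromTheory T) :
    IsKromTheory (unfoldList T L) := by
  induction L generalizing T with
  | nil => exact h
  | cons p L ih =>
    refine ih _ fun d hd => ?_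
    rcases mem_unfold1 T p d hd with hd | ⟨c, hc, c', hc', h1, h2, rfl⟩
    · exact h d hd
    · have hs : res c c' p ⊆ c.erase (p, true) ∪ c'.erase (p, false) := by
        intro l hl
        rw [mem_res] at hl
        simp only [Finset.mem_union, Finset.mem_erase]
        have a : l ≠ (p, true) := fun e => hl.2 (by rw [e])
        have b : l ≠ (p, false) := fun e => hl.2 (by rw [e])
        tauto
      have := Finset.card_le_card hs
      have := Finset.card_union_le (c.erase (p, true)) (c'.erase (p, false))
      have := Finset.card_erase_of_mem h1
      have := Finset.card_erase_of_mem h2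
      have := h c hc
      have := h c' hc'
      omega

theorem varsC_subset_varsT (T : Finset (Clause α)) (c : Clause α) (hc : c ∈ T) :
    varsC c ⊆ varsT T := Finset.le_sup (f := varsC) hc

theorem qh_inter (Q H W : Finset α) (c : Clause α) (hW : varsC c ⊆ W) (h : QHcond Q H c) :
    QHcond (Q ∩ W) (H ∩ W) c := by
  have e1 : varsC c ∩ (Q ∩ W) = varsC c ∩ Q := by
    ext q
    have := @hW q
    simp only [Finset.mem_inter]
    tauto
  have e2 : posC c ∩ (H ∩ W) = posC c ∩ H := by
    ext q
    have := @hW q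
    simp only [Finset.mem_inter, mem_posC, mem_varsC] at *
    tauto
  unfold QHcond
  rw [e1, e2]
  exact h

/-- If `Σ` is a Horn (resp. Krom, Horn renamable, q-Horn) theory,
then so is `unfold(Σ, V)`. -/
theorem unfold_preserves_fragments
    (S : Finset (Clause α)) (hS : ∀ c ∈ S, IsClause c) (V : List α) :
    (IsHornTheory S → IsHornTheory (unfoldList S V)) ∧
    (IsKromTheory S → IsKromTheory (unfoldList S V)) ∧
    (IsRenHorn S → IsRenHorn (unfoldList S V)) ∧
    (IsQHorn S → IsQHorn (unfoldList S V)) := by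
  refine ⟨fun h => ?_, krom_unfoldList V S, ?_, ?_⟩
  · intro c hc
    have := renHorn_unfoldList ∅ V S (fun c hc => by rw [renClause_empty]; exact h c hc) c hc
    rwa [renClause_empty] at this
  · rintro ⟨W, h⟩
    refine ⟨W, fun d hd => ?_⟩
    obtain ⟨c, hc, rfl⟩ := Finset.mem_image.1 hd
    exact renHorn_unfoldList W V S (fun c hc => h _ (Finset.mem_image_of_mem _ hc)) c hc
  · rintro ⟨W, Q, H, hd, hu, h⟩
    have key := unfoldList_ren W Q H V S
      (fun c hc => by
        rw [hu, ← varsC_renClause W c]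
        exact varsC_subset_varsT _ _ (Finset.mem_image_of_mem _ hc))
      (fun c hc => h _ (Finset.mem_image_of_mem _ hc))
    refine ⟨W, Q ∩ varsT (renTheory W (unfoldList S V)),
      H ∩ varsT (renTheory W (unfoldList S V)), ?_, ?_, ?_⟩
    · rw [← Finset.inter_inter_distrib_right, hd, Finset.empty_inter]
    · rw [← Finset.union_inter_distrib_right]
      refine Finset.inter_eq_right.2 (Finset.sup_le fun d hd => ?_)
      obtain ⟨c, hc, rfl⟩ := Finset.mem_image.1 hd
      rw [varsC_renClause]
      exact (key c hc).2
    · intro d hd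
      refine qh_inter _ _ _ _ (varsC_subset_varsT _ _ hd) ?_
      obtain ⟨c, hc, rfl⟩ := Finset.mem_image.1 hd
      exact (key c hc).1
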